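/- arXiv:1111.5856 — 2 statements merged into one kernel-verified Lean document; each statement's English description precedes it below -/
import Mathlib

section
/- Let n, m, r be positive integers with m ≤ r, and let P be an r × m matrix with entries in the polynomial ring ℂ[x₁,…,xₙ] such that there exist positive integers d₁,…,d_r for which every entry in the i-th row of P is homogeneous of degree dᵢ. Let I be the ideal of ℂ[x₁,…,xₙ] generated by the determinants of all m × m submatrices of P obtained by selecting m of the r rows. Then the height of I is at most r − m + 1. (Equivalently: the characteristic variety {ξ ∈ ℙ^ℂT* : rank P(ξ) < m} of a system of r differential equations on m unknown functions has codimension at most r − m + 1.) -/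
/-- The height of an ideal: the infimum of the heights (in the prime spectrum,
ordered by inclusion) of the prime ideals containing it. -/
noncomputable def idealHeight {R : Type*} [CommRing R] (I : Ideal R) : ℕ∞ :=
  ⨅ p ∈ {p : PrimeSpectrum R | I ≤ p.asIdeal}, Order.height p

/-- The ideal of maximal minors of an `r × m` matrix `P`: generated by the
determinants of all `m × m` row-submatrices of `P`. -/
def maximalMinorsIdeal {R : Type*} [CommRing R] {r m : ℕ}
    (P : Matrix (Fin r) (Fin m) R) : Ideal R :=
  Ideal.span { d : R | ∃ f : Fin m → Fin r, StrictMono f ∧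
    d = Matrix.det (Matrix.of fun i j => P (f i) j) }

/-!
The bound holds for every minimal prime `p` of the maximal minors of a matrix `M` over a Noetherian
ring (Eagon–Northcott), by induction on the number of columns. If some entry of `M` lies outside
`p`, it becomes a unit after localizing at `p`, and clearing its row by column operations removes
one row and one column. If all entries lie in `p`, a single column is covered by Krull's height
theorem. Otherwise, add an indeterminate `X` to one entry: `p R[X]` has the same height as `p`, it
still contains the maximal minors because some column is untouched, and it is still minimal over
them because setting `X = 0` gives back `M`. The modified entry now lies outside `p R[X]`.
-/

section MaximalMinors

variable {R : Type*} [CommRing R] {r m : ℕ}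

theorem maximalMinorsIdeal_eq_span_range (M : Matrix (Fin r) (Fin m) R) :
    maximalMinorsIdeal M =
      Ideal.span (Set.range fun f : Fin m → Fin r => (M.submatrix f id).det) := by
  refine le_antisymm (Ideal.span_mono ?_) (Ideal.span_le.mpr ?_)
  · rintro _ ⟨f, -, rfl⟩
    exact ⟨f, rfl⟩
  · rintro _ ⟨f, rfl⟩
    by_cases hf : Function.Injective f
    · have hsorted : ((M.submatrix f id).submatrix (Tuple.sort f) id).det ∈ maximalMinorsIdeal M :=
        Ideal.subset_span ⟨f ∘ Tuple.sort f,
          (Tuple.monotone_sort f).strictMono_of_injective (hf.comp (Tuple.sort f).injective), rfl⟩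
      rw [Matrix.det_permute] at hsorted
      exact (Ideal.unit_mul_mem_iff_mem _ ((Units.isUnit _).map (Int.castRingHom R))).mp hsorted
    · obtain ⟨a, b, hab, hne⟩ := Function.not_injective_iff.mp hf
      have hzero : (M.submatrix f id).det = 0 :=
        Matrix.det_zero_of_row_eq hne (by ext j; simp [Matrix.submatrix, hab])
      simp [hzero]

theorem det_submatrix_mem_maximalMinorsIdeal (M : Matrix (Fin r) (Fin m) R) (f : Fin m → Fin r) :
    (M.submatrix f id).det ∈ maximalMinorsIdeal M := by
  rw [maximalMinorsIdeal_eq_span_range]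
  exact Ideal.subset_span ⟨f, rfl⟩

theorem maximalMinorsIdeal_le_iff {M : Matrix (Fin r) (Fin m) R} {J : Ideal R} :
    maximalMinorsIdeal M ≤ J ↔ ∀ f : Fin m → Fin r, (M.submatrix f id).det ∈ J := by
  rw [maximalMinorsIdeal_eq_span_range, Ideal.span_le, Set.range_subset_iff]
  rfl

theorem maximalMinorsIdeal_map {S : Type*} [CommRing S] (M : Matrix (Fin r) (Fin m) R)
    (φ : R →+* S) : maximalMinorsIdeal (M.map φ) = (maximalMinorsIdeal M).map φ := by
  rw [maximalMinorsIdeal_eq_span_range, maximalMinorsIdeal_eq_span_range, Ideal.map_span,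
    ← Set.range_comp]
  congr 2
  ext f
  rw [Function.comp_apply, RingHom.map_det, RingHom.mapMatrix_apply, Matrix.submatrix_map]

theorem maximalMinorsIdeal_fin_zero (M : Matrix (Fin r) (Fin 0) R) : maximalMinorsIdeal M = ⊤ := by
  rw [Ideal.eq_top_iff_one, ← Matrix.det_fin_zero]
  exact det_submatrix_mem_maximalMinorsIdeal M Fin.elim0

theorem maximalMinorsIdeal_eq_bot_of_lt (M : Matrix (Fin r) (Fin m) R) (h : r < m) :
    maximalMinorsIdeal M = ⊥ := by
  rw [maximalMinorsIdeal, Ideal.span_eq_bot]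
  rintro _ ⟨f, hf, -⟩
  exact absurd (Fin.le_of_injective f hf.injective) h.not_ge

theorem maximalMinorsIdeal_le_of_column_mem {M : Matrix (Fin r) (Fin m) R} {J : Ideal R}
    (j : Fin m) (hj : ∀ i, M i j ∈ J) : maximalMinorsIdeal M ≤ J := by
  refine maximalMinorsIdeal_le_iff.mpr fun f => ?_
  rw [← Ideal.Quotient.eq_zero_iff_mem, RingHom.map_det]
  exact Matrix.det_eq_zero_of_column_eq_zero j fun k =>
    Ideal.Quotient.eq_zero_iff_mem.mpr (hj (f k))

theorem maximalMinorsIdeal_add_mul_column (M : Matrix (Fin r) (Fin m) R) {c : Fin m → R}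
    {j : Fin m} (hc : c j = 0) :
    maximalMinorsIdeal (Matrix.of fun k l => M k l + c l * M k j) = maximalMinorsIdeal M := by
  rw [maximalMinorsIdeal_eq_span_range, maximalMinorsIdeal_eq_span_range]
  congr 2
  ext f
  rw [← Matrix.det_transpose, ← Matrix.det_transpose (M.submatrix f id)]
  exact Matrix.det_eq_of_forall_row_eq_smul_add_const c j hc fun _ _ => rfl

theorem maximalMinorsIdeal_le_submatrix_succAbove {M : Matrix (Fin (r + 1)) (Fin (m + 1)) R}
    {i : Fin (r + 1)} {j : Fin (m + 1)} (hrow : ∀ l ≠ j, M i l = 0) :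
    maximalMinorsIdeal M ≤ maximalMinorsIdeal (M.submatrix i.succAbove j.succAbove) := by
  refine maximalMinorsIdeal_le_iff.mpr fun f => ?_
  rw [Matrix.det_succ_column _ j]
  refine Ideal.sum_mem _ fun k _ => Ideal.mul_mem_left _ _ ?_
  by_cases hf : ∃ k', f (k.succAbove k') = i
  · obtain ⟨k', hk'⟩ := hf
    rw [Matrix.det_eq_zero_of_row_eq_zero k' fun l => by
      simpa [hk'] using hrow _ (Fin.succAbove_ne j l)]
    exact Ideal.zero_mem _
  · push Not at hf
    choose g hg using fun k' => Fin.exists_succAbove_eq (hf k')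
    convert! det_submatrix_mem_maximalMinorsIdeal (M.submatrix i.succAbove j.succAbove) g using 2
    ext k' l
    simp [hg]

theorem maximalMinorsIdeal_submatrix_succAbove_le {M : Matrix (Fin (r + 1)) (Fin (m + 1)) R}
    {i : Fin (r + 1)} {j : Fin (m + 1)} (hunit : IsUnit (M i j)) (hrow : ∀ l ≠ j, M i l = 0) :
    maximalMinorsIdeal (M.submatrix i.succAbove j.succAbove) ≤ maximalMinorsIdeal M := by
  refine maximalMinorsIdeal_le_iff.mpr fun g => ?_
  let f : Fin (m + 1) → Fin (r + 1) := Fin.cons i (i.succAbove ∘ g)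
  have hexpand : (M.submatrix f id).det =
      (-1) ^ (j : ℕ) * M i j * ((M.submatrix i.succAbove j.succAbove).submatrix g id).det := by
    rw [Matrix.det_succ_row_zero, Finset.sum_eq_single_of_mem j (Finset.mem_univ j)
      fun l _ hl => by simp [f, hrow l hl]]
    rfl
  have hminor := det_submatrix_mem_maximalMinorsIdeal M f
  rw [hexpand] at hminor
  exact (Ideal.unit_mul_mem_iff_mem _ ((isUnit_one.neg.pow _).mul hunit)).mp hminor

theorem exists_maximalMinorsIdeal_eq_of_isUnit (M : Matrix (Fin (r + 1)) (Fin (m + 1)) R)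
    {i : Fin (r + 1)} {j : Fin (m + 1)} (h : IsUnit (M i j)) :
    ∃ N : Matrix (Fin r) (Fin m) R, maximalMinorsIdeal N = maximalMinorsIdeal M := by
  obtain ⟨u, hu⟩ := h
  let c : Fin (m + 1) → R := Function.update (fun l => -(M i l * ↑u⁻¹)) j 0
  have hc : c j = 0 := by simp [c]
  let L : Matrix (Fin (r + 1)) (Fin (m + 1)) R := Matrix.of fun k l => M k l + c l * M k j
  have hpivot : IsUnit (L i j) := by simp [L, hc, ← hu]
  have hrow (l) (hl : l ≠ j) : L i l = 0 := by simp [L, c, hl, ← hu, mul_assoc]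
  exact ⟨L.submatrix i.succAbove j.succAbove,
    (le_antisymm (maximalMinorsIdeal_submatrix_succAbove_le hpivot hrow)
      (maximalMinorsIdeal_le_submatrix_succAbove hrow)).trans
        (maximalMinorsIdeal_add_mul_column M hc)⟩

end MaximalMinors

section PolynomialExtension

open Polynomial

variable {R : Type*} [CommRing R] {p : Ideal R}

theorem X_notMem_map_C (hp : p ≠ ⊤) : (X : R[X]) ∉ p.map C := by
  rw [Ideal.mem_map_C_iff]
  exact fun h => hp (p.eq_top_iff_one.mpr (by simpa using h 1))

theorem height_map_C_of_isPrime [IsNoetherianRing R] (p : Ideal R) [p.IsPrime] :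
    (p.map C).height = p.height := by
  have : Nontrivial R := (⟨p, ‹_›⟩ : PrimeSpectrum R).nontrivial
  have : (p.map C).LiesOver p := ⟨(p.comap_map_eq_self_of_faithfullyFlat (B := R[X])).symm⟩
  simp [Ideal.height_eq_height_add_of_liesOver_of_hasGoingDown p]

theorem map_C_mem_minimalPrimes_of_map_constantCoeff [IsNoetherianRing R] {J : Ideal R[X]}
    (hp : p ∈ (J.map constantCoeff).minimalPrimes) (hJ : J ≤ p.map C) :
    p.map C ∈ J.minimalPrimes := by
  have := hp.isPrime
  have hlt : p.map C < p.comap constantCoeff := by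
    refine lt_of_le_of_ne ?_ fun heq => X_notMem_map_C this.ne_top (heq ▸ by simp)
    exact Ideal.map_le_iff_le_comap.mpr fun x hx => by simpa using hx
  have hcomap :
      (J.map constantCoeff).comap constantCoeff = Ideal.span (insert X (J : Set R[X])) := by
    rw [Ideal.comap_map_of_surjective' (constantCoeff (R := R)) constantCoeff_surjective,
      ker_constantCoeff, Ideal.span_insert, Ideal.span_eq, sup_comm]
  have hmin : p.comap constantCoeff ∈ (Ideal.span (insert X (J : Set R[X]))).minimalPrimes :=
    hcomap ▸ Ideal.minimalPrimes_comap_of_surjective constantCoeff_surjective hp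
  simpa using Ideal.mem_minimalPrimes_span_of_mem_minimalPrimes_span_insert hlt X J hmin J hJ
    fun x hx => Ideal.le_radical (Ideal.subset_span (Set.mem_insert_of_mem _ hx))

end PolynomialExtension

section EagonNorthcott

open Polynomial

variable {R : Type*} [CommRing R] {r m : ℕ} {p : Ideal R}

theorem height_le_of_mem_minimalPrimes_maximalMinorsIdeal_fin_one [IsNoetherianRing R]
    {M : Matrix (Fin r) (Fin 1) R} (hp : p ∈ (maximalMinorsIdeal M).minimalPrimes) :
    p.height ≤ r := by
  rw [maximalMinorsIdeal_eq_span_range, ← Set.image_univ] at hp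
  refine (Ideal.height_le_card_of_mem_minimalPrimes_span (Set.toFinite _) hp).trans ?_
  exact_mod_cast (Set.ncard_image_le Set.finite_univ).trans (by simp [Set.ncard_univ])

theorem exists_maximalIdeal_mem_minimalPrimes_maximalMinorsIdeal [p.IsPrime]
    {M : Matrix (Fin (r + 1)) (Fin (m + 1)) R} (hp : p ∈ (maximalMinorsIdeal M).minimalPrimes)
    {i : Fin (r + 1)} {j : Fin (m + 1)} (hij : M i j ∉ p) :
    ∃ N : Matrix (Fin r) (Fin m) (Localization.AtPrime p),
      IsLocalRing.maximalIdeal (Localization.AtPrime p) ∈ (maximalMinorsIdeal N).minimalPrimes := by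
  obtain ⟨N, hN⟩ := exists_maximalMinorsIdeal_eq_of_isUnit
    (M.map (algebraMap R (Localization.AtPrime p)))
    (IsLocalization.map_units _ (⟨M i j, hij⟩ : p.primeCompl))
  refine ⟨N, ?_⟩
  rwa [hN, maximalMinorsIdeal_map, IsLocalization.minimalPrimes_map p.primeCompl,
    Set.mem_preimage, Localization.AtPrime.under_maximalIdeal]

theorem map_C_mem_minimalPrimes_maximalMinorsIdeal_add_single [IsNoetherianRing R]
    {M : Matrix (Fin r) (Fin m) R} (hp : p ∈ (maximalMinorsIdeal M).minimalPrimes)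
    (i : Fin r) {j j' : Fin m} (hj : j ≠ j') (hM : ∀ k, M k j' ∈ p) :
    p.map C ∈ (maximalMinorsIdeal (M.map C + Matrix.single i j X)).minimalPrimes := by
  apply map_C_mem_minimalPrimes_of_map_constantCoeff
  · have hspecialize : (M.map C + Matrix.single i j X).map constantCoeff = M := by
      ext k l
      by_cases h : i = k ∧ j = l <;> simp [h]
    rwa [← maximalMinorsIdeal_map, hspecialize]
  · refine maximalMinorsIdeal_le_of_column_mem j' fun k => ?_
    simpa [hj] using Ideal.mem_map_of_mem C (hM k)

theorem height_le_of_mem_minimalPrimes_maximalMinorsIdeal [IsNoetherianRing R]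
    {M : Matrix (Fin r) (Fin m) R} (hp : p ∈ (maximalMinorsIdeal M).minimalPrimes) :
    p.height ≤ (r + 1 - m : ℕ) := by
  have hprime := hp.isPrime
  induction m generalizing R r with
  | zero => exact absurd (top_le_iff.mp (maximalMinorsIdeal_fin_zero M ▸ hp.le)) hprime.ne_top
  | succ m ih =>
    obtain _ | r := r
    · rw [maximalMinorsIdeal_eq_bot_of_lt M m.succ_pos] at hp
      simp [Ideal.height_eq_zero_iff.mpr hp]
    wlog hM : ∃ i j, M i j ∉ p generalizing R
    · push Not at hM
      obtain _ | m := m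
      · simpa using height_le_of_mem_minimalPrimes_maximalMinorsIdeal_fin_one hp
      · have hentry : (M.map C + Matrix.single 0 0 X : Matrix _ _ R[X]) 0 0 ∉ p.map C := by
          simpa [Ideal.add_mem_iff_right _ (Ideal.mem_map_of_mem C (hM 0 0))]
            using X_notMem_map_C hprime.ne_top
        rw [← height_map_C_of_isPrime p]
        exact this inferInstance
          (map_C_mem_minimalPrimes_maximalMinorsIdeal_add_single hp 0 zero_ne_one
            fun k => hM k 1) ⟨0, 0, hentry⟩
    obtain ⟨i, j, hij⟩ := hM
    obtain ⟨N, hN⟩ := exists_maximalIdeal_mem_minimalPrimes_maximalMinorsIdeal hp hij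
    rw [← Localization.AtPrime.under_maximalIdeal (I := p),
      IsLocalization.height_under p.primeCompl]
    simpa using ih hN inferInstance

end EagonNorthcott

theorem idealHeight_le_height {R : Type*} [CommRing R] {I p : Ideal R} [hp : p.IsPrime]
    (h : I ≤ p) : idealHeight I ≤ p.height :=
  (iInf₂_le (⟨p, hp⟩ : PrimeSpectrum R) h).trans_eq (PrimeSpectrum.height_eq_orderHeight _).symm

theorem maximalMinorsIdeal_ne_top_of_isHomogeneous {σ K : Type*} [CommRing K] [Nontrivial K]
    {r m : ℕ} {P : Matrix (Fin r) (Fin m) (MvPolynomial σ K)} {d : Fin r → ℕ}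
    (hd : ∀ i, 0 < d i) (j : Fin m) (hhom : ∀ i, (P i j).IsHomogeneous (d i)) :
    maximalMinorsIdeal P ≠ ⊤ := by
  refine ne_top_of_le_ne_top (RingHom.ker_ne_top (MvPolynomial.constantCoeff (R := K) (σ := σ)))
    (maximalMinorsIdeal_le_of_column_mem j fun i => ?_)
  exact (hhom i).coeff_eq_zero (by simpa using (hd i).ne)

theorem height_maximalMinors_le_general {R : Type*} [CommRing R] [IsNoetherianRing R] {r m : ℕ}
    (P : Matrix (Fin r) (Fin m) R) (hP : maximalMinorsIdeal P ≠ ⊤) :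
    idealHeight (maximalMinorsIdeal P) ≤ (r + 1 - m : ℕ) := by
  obtain ⟨p, hp⟩ := Ideal.nonempty_minimalPrimes hP
  have := hp.isPrime
  exact (idealHeight_le_height hp.le).trans (height_le_of_mem_minimalPrimes_maximalMinorsIdeal hp)

/-- The characteristic variety of a system of `r` differential equations on `m`
unknown functions (in `n` independent variables) has codimension at most
`r - m + 1`: if every entry of the `i`-th row of the symbol matrix `P` is
homogeneous of degree `dᵢ > 0`, then the ideal of maximal minors of `P` has
height at most `r - m + 1`. -/
theorem height_maximalMinors_le (n m r : ℕ) (hn : 0 < n) (hm : 0 < m) (hr : 0 < r)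
    (hmr : m ≤ r) (P : Matrix (Fin r) (Fin m) (MvPolynomial (Fin n) ℂ))
    (d : Fin r → ℕ) (hd : ∀ i, 0 < d i)
    (hhom : ∀ i j, (P i j).IsHomogeneous (d i)) :
    idealHeight (maximalMinorsIdeal P) ≤ (r - m + 1 : ℕ) := by
  rw [← Nat.sub_add_comm hmr]
  exact height_maximalMinors_le_general P
    (maximalMinorsIdeal_ne_top_of_isHomogeneous hd ⟨0, hm⟩ fun i => hhom i _)
end

section
/- Let n ≥ 1 and m ≥ 2. Let P, Q, K be m × m matrices with entries in the polynomial ring ℂ[x₁,…,xₙ] such that every entry of P is homogeneous of a common positive degree a, every entry of Q is homogeneous of a common positive degree b, and P·Q = K·P. Let I be the ideal of ℂ[x₁,…,xₙ] generated by the determinants of all m × m submatrices of the (2m) × m block matrix obtained by stacking P on top of Q. Then the height of I is at most m. (Equivalently: the characteristic variety {ξ : rank [P(ξ); Q(ξ)] < m} of the joint system of a determined PDE and its symmetry has codimension at most m.) -/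
/-- The block matrix obtained by stacking the `m × m` matrix `P` on top of the
`m × m` matrix `Q`, as a `(2m) × m` matrix. -/
def stack {R : Type*} {m : ℕ} (P Q : Matrix (Fin m) (Fin m) R) :
    Matrix (Fin (2 * m)) (Fin m) R :=
  Matrix.of fun i j => if h : (i : ℕ) < m then P ⟨i, h⟩ j
    else Q ⟨(i : ℕ) - m, by omega⟩ j

/-!
The height is in fact at most `2`, over every Noetherian ring `R`, as soon as `det P` and the
entries of `Q` lie in a proper ideal. Localize, so that this ideal lies in the Jacobson radical.
Dividing out a suitable prime containing `det P` lowers the dimension by at most one and makes `P`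
singular over a domain `A`. By `P * Q = K * P`, the kernel of `P` over an algebraic closure of the
fraction field of `A` is `Q`-stable, so it contains an eigenvector `w` of `Q`, with eigenvalue `μ`.
The extension `S = A[μ]` is integral, and `μ` lies in its Jacobson radical because `Q` vanishes
modulo every maximal ideal of `A`; hence some prime of `S` containing `μ` costs at most one more
dimension. Finally, if `N` consists of rows of `P` and `Q`, then `N w = μ C w` for a 0-1 matrix `C`,
so `det N` is an eigenvalue of `μ • (adj N * C)` and lies in every prime of `S` containing `μ`.
-/

open Matrix
open Order (height coheight)

section Dimension

theorem ringKrullDim_quotient_eq_coheight {R : Type*} [CommRing R] (p : PrimeSpectrum R) :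
    ringKrullDim (R ⧸ p.asIdeal) = coheight p := by
  rw [ringKrullDim_quotient, Order.coheight_eq_krullDim_Ici]
  rfl

theorem coheight_le_coheight_comap_of_surjective {R S : Type*} [CommRing R] [CommRing S]
    {f : R →+* S} (hf : Function.Surjective f) (q : PrimeSpectrum S) :
    coheight q ≤ coheight (PrimeSpectrum.comap f q) :=
  Order.coheight_le_coheight_apply_of_strictMono (PrimeSpectrum.comap f)
    (Monotone.strictMono_of_injective (fun _ _ h => Ideal.comap_mono h)
      (PrimeSpectrum.comap_injective_of_surjective f hf)) q

theorem coheight_le_coheight_comap_of_isIntegral {A S : Type*} [CommRing A] [CommRing S]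
    [Algebra A S] [Algebra.IsIntegral A S] (q : PrimeSpectrum S) :
    coheight q ≤ coheight (PrimeSpectrum.comap (algebraMap A S) q) :=
  Order.coheight_le_coheight_apply_of_strictMono (PrimeSpectrum.comap (algebraMap A S))
    (fun _ _ h => Ideal.IsIntegral.comap_lt_comap (R := A) h) q

theorem ringKrullDim_le_of_isIntegral {A S : Type*} [CommRing A] [CommRing S] [Algebra A S]
    [Algebra.IsIntegral A S] [FaithfulSMul A S] : ringKrullDim A ≤ ringKrullDim S := by
  refine iSup_le fun l => ?_
  obtain ⟨P, hP, hPl⟩ := Ideal.nonempty_primesOver (S := S) l.head.asIdeal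
  obtain ⟨l', hl', -⟩ := Ideal.exists_ltSeries_of_hasGoingUp l P
  exact hl' ▸ Order.LTSeries.length_le_krullDim l'

theorem exists_coheight_eq_ringKrullDim (R : Type*) [CommRing R] [IsNoetherianRing R]
    [Nontrivial R] : ∃ p : PrimeSpectrum R, coheight p = ringKrullDim R := by
  have : Finite (minimalPrimes R) := minimalPrimes.finite_of_isNoetherianRing R
  let toSpec (p : minimalPrimes R) : PrimeSpectrum R := ⟨p, p.2.1.1⟩
  have exists_le (a : PrimeSpectrum R) : ∃ p, toSpec p ≤ a := by
    obtain ⟨p, hp, hpa⟩ := Ideal.exists_minimalPrimes_le (bot_le : ⊥ ≤ a.asIdeal)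
    exact ⟨⟨p, hp⟩, hpa⟩
  have : Nonempty (minimalPrimes R) := (exists_le (Classical.arbitrary _)).nonempty
  obtain ⟨p, hp⟩ := Finite.exists_max fun p => coheight (toSpec p)
  refine ⟨toSpec p, le_antisymm (Order.coheight_le_krullDim _) ?_⟩
  rw [ringKrullDim, Order.krullDim_eq_iSup_coheight]
  refine iSup_le fun a => ?_
  obtain ⟨p', hp'⟩ := exists_le a
  exact_mod_cast (Order.coheight_anti hp').trans (hp p')

theorem exists_mem_ringKrullDim_le_coheight_add_one {R : Type*} [CommRing R] [IsNoetherianRing R]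
    [Nontrivial R] {r : R} (hr : r ∈ Ring.jacobson R) :
    ∃ p : PrimeSpectrum R, r ∈ p.asIdeal ∧ ringKrullDim R ≤ coheight p + 1 := by
  have : Nontrivial (R ⧸ Ideal.span {r}) := by
    obtain ⟨M, hM⟩ := Ideal.exists_maximal R
    have hrM : r ∈ M := Ring.jacobson_le_of_isMaximal M hr
    exact Ideal.Quotient.nontrivial_iff.mpr
      (ne_top_of_le_ne_top hM.ne_top ((Ideal.span_singleton_le_iff_mem M).mpr hrM))
  obtain ⟨q, hq⟩ := exists_coheight_eq_ringKrullDim (R ⧸ Ideal.span {r})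
  refine ⟨PrimeSpectrum.comap (Ideal.Quotient.mk _) q, ?_, ?_⟩
  · have : Ideal.Quotient.mk (Ideal.span {r}) r = 0 :=
      Ideal.Quotient.eq_zero_iff_mem.mpr (Ideal.mem_span_singleton_self r)
    simp [this]
  · calc ringKrullDim R ≤ ringKrullDim (R ⧸ Ideal.span {r}) + 1 := by
          simpa using ringKrullDim_le_ringKrullDim_quotient_add_encard {r} (by simpa using hr)
      _ ≤ coheight (PrimeSpectrum.comap (Ideal.Quotient.mk _) q) + 1 := by
          rw [← hq]
          gcongr
          exact_mod_cast coheight_le_coheight_comap_of_surjective Ideal.Quotient.mk_surjective q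

theorem height_add_coheight_le_ringKrullDim {R : Type*} [CommRing R] (p : PrimeSpectrum R) :
    ((height p + coheight p : ℕ∞) : WithBot ℕ∞) ≤ ringKrullDim R := by
  have : Nonempty (PrimeSpectrum R) := ⟨p⟩
  rw [ringKrullDim, Order.krullDim_eq_iSup_height_add_coheight_of_nonempty]
  exact_mod_cast le_iSup (fun a : PrimeSpectrum R => height a + coheight a) p

end Dimension

section Eigenvectors

variable {ι : Type*} [Fintype ι]

theorem exists_eigenvector_of_mul_eq_mul {L : Type*} [Field L] [IsAlgClosed L] [DecidableEq ι]
    {P Q K : Matrix ι ι L} (h : P * Q = K * P) (hP : P.det = 0) :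
    ∃ (μ : L) (w : ι → L), w ≠ 0 ∧ P *ᵥ w = 0 ∧ Q *ᵥ w = μ • w := by
  obtain ⟨u, hu, hPu⟩ := exists_mulVec_eq_zero_iff.mpr hP
  have hinv : ∀ x ∈ LinearMap.ker P.mulVecLin, Q.mulVecLin x ∈ LinearMap.ker P.mulVecLin := by
    intro x hx
    simp only [LinearMap.mem_ker, mulVecLin_apply] at hx ⊢
    rw [mulVec_mulVec, h, ← mulVec_mulVec, hx, mulVec_zero]
  have : Nontrivial (LinearMap.ker P.mulVecLin) :=
    ⟨⟨u, hPu⟩, 0, fun e => hu (congrArg Subtype.val e)⟩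
  obtain ⟨μ, hμ⟩ := Module.End.exists_eigenvalue (Q.mulVecLin.restrict hinv)
  obtain ⟨w, hw⟩ := hμ.exists_hasEigenvector
  exact ⟨μ, w, fun e => hw.2 (Subtype.ext e), w.2, congrArg Subtype.val hw.apply_eq_smul⟩

variable {S L : Type*} [CommRing S] [CommRing L] [IsDomain L] [Algebra S L] {w : ι → L}

theorem isRoot_charpoly_of_mulVec_eq_smul [DecidableEq ι] {A : Matrix ι ι L} {μ : L} (hw : w ≠ 0)
    (h : A *ᵥ w = μ • w) : A.charpoly.IsRoot μ := by
  rw [Polynomial.IsRoot, eval_charpoly]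
  refine exists_mulVec_eq_zero_iff.mp ⟨w, hw, ?_⟩
  rw [sub_mulVec, h, sub_eq_zero]
  ext i
  simp [scalar_apply]

theorem isIntegral_of_mulVec_eq_smul {A : Matrix ι ι S} {μ : L} (hw : w ≠ 0)
    (h : A.map (algebraMap S L) *ᵥ w = μ • w) : IsIntegral S μ := by
  classical
  refine ⟨A.charpoly, A.charpoly_monic, ?_⟩
  rw [← Polynomial.eval_map, ← charpoly_map]
  exact isRoot_charpoly_of_mulVec_eq_smul hw h

theorem mem_of_mulVec_eq_smul [FaithfulSMul S L] {q : Ideal S} [q.IsPrime] {A : Matrix ι ι S}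
    (hA : ∀ i j, A i j ∈ q) {x : S} (hw : w ≠ 0)
    (h : A.map (algebraMap S L) *ᵥ w = algebraMap S L x • w) : x ∈ q := by
  classical
  have hroot : A.charpoly.IsRoot x := by
    refine (Polynomial.isRoot_map_iff (FaithfulSMul.algebraMap_injective S L)).mp ?_
    rw [← charpoly_map]
    exact isRoot_charpoly_of_mulVec_eq_smul hw h
  have hAq : A.map (Ideal.Quotient.mk q) = 0 := by
    ext i j
    exact Ideal.Quotient.eq_zero_iff_mem.mpr (hA i j)
  have hpow : Ideal.Quotient.mk q x ^ Fintype.card ι = 0 := by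
    simpa [← charpoly_map, hAq] using hroot.map (f := Ideal.Quotient.mk q)
  exact Ideal.Quotient.eq_zero_iff_mem.mp (eq_zero_of_pow_eq_zero hpow)

theorem det_submatrix_fromRows_mem [DecidableEq ι] [FaithfulSMul S L] {q : Ideal S} [q.IsPrime]
    {P Q : Matrix ι ι S} {x : S} (hx : x ∈ q) (hw : w ≠ 0)
    (hP : P.map (algebraMap S L) *ᵥ w = 0)
    (hQ : Q.map (algebraMap S L) *ᵥ w = algebraMap S L x • w) (f : ι → ι ⊕ ι) :
    ((fromRows P Q).submatrix f id).det ∈ q := by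
  let N := (fromRows P Q).submatrix f id
  let C : Matrix ι ι S := (fromRows 0 1).submatrix f id
  have hrows : (fromRows P Q).map (algebraMap S L) *ᵥ w =
      (x • fromRows 0 1 : Matrix (ι ⊕ ι) ι S).map (algebraMap S L) *ᵥ w := by
    rw [fromRows_map, fromRows_mulVec, hP, hQ, Matrix.map_smulₛₗ _ (algebraMap S L) x (by simp),
      fromRows_map, smul_mulVec, fromRows_mulVec]
    ext (i | i) <;> simp [Algebra.smul_def]
  have hN : N.map (algebraMap S L) *ᵥ w = (x • C).map (algebraMap S L) *ᵥ w :=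
    funext fun i => congrFun hrows (f i)
  have hdet : (N.adjugate * (x • C)).map (algebraMap S L) *ᵥ w = algebraMap S L N.det • w :=
    calc (N.adjugate * (x • C)).map (algebraMap S L) *ᵥ w
        = (N.adjugate * N).map (algebraMap S L) *ᵥ w := by
          rw [Matrix.map_mul, Matrix.map_mul, ← mulVec_mulVec, ← hN, mulVec_mulVec]
      _ = algebraMap S L N.det • w := by
          rw [adjugate_mul]
          simp [Matrix.map_smul', smul_mulVec]
  refine mem_of_mulVec_eq_smul (fun i j => ?_) hw hdet
  rw [Matrix.mul_smul]
  exact q.mul_mem_right _ hx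

end Eigenvectors

section Minors

variable {ι R : Type*} [Fintype ι] [DecidableEq ι] [CommRing R] [IsNoetherianRing R]
  {P Q K : Matrix ι ι R}

theorem exists_minors_mem_of_det_eq_zero [IsDomain R] (hP : P.det = 0)
    (hQ : ∀ i j, Q i j ∈ Ring.jacobson R) (h : P * Q = K * P) :
    ∃ q : PrimeSpectrum R, ringKrullDim R ≤ coheight q + 1 ∧
      ∀ f : ι → ι ⊕ ι, ((fromRows P Q).submatrix f id).det ∈ q.asIdeal := by
  let L := AlgebraicClosure (FractionRing R)
  let φ : Matrix ι ι R →+* Matrix ι ι L := (algebraMap R L).mapMatrix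
  obtain ⟨μ, w, hw, hPw, hQw⟩ :=
    exists_eigenvector_of_mul_eq_mul (P := φ P) (Q := φ Q) (K := φ K)
      (by rw [← map_mul, h, map_mul]) (by rw [← RingHom.map_det, hP, map_zero])
  have hμ : IsIntegral R μ := isIntegral_of_mulVec_eq_smul hw hQw
  let S := Algebra.adjoin R {μ}
  have : Algebra.IsIntegral R S := Algebra.IsIntegral.adjoin (by simpa)
  have : Module.Finite R S := Module.Finite.iff_fg.mpr hμ.fg_adjoin_singleton
  have : IsNoetherianRing S := IsNoetherianRing.of_finite R S
  have : FaithfulSMul R L := FaithfulSMul.trans R (FractionRing R) L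
  have : FaithfulSMul R S := FaithfulSMul.tower_bot R S L
  let x : S := ⟨μ, Algebra.self_mem_adjoin_singleton R μ⟩
  have hx : x ∈ Ring.jacobson S := by
    rw [Ring.jacobson_eq_sInf_isMaximal, Ideal.mem_sInf]
    intro M (hM : M.IsMaximal)
    have : (M.comap (algebraMap R S)).IsMaximal :=
      Ideal.isMaximal_comap_of_isIntegral_of_isMaximal M
    exact mem_of_mulVec_eq_smul (A := Q.map (algebraMap R S))
      (fun i j => Ring.jacobson_le_of_isMaximal (M.comap (algebraMap R S)) (hQ i j)) hw hQw
  obtain ⟨q, hxq, hq⟩ := exists_mem_ringKrullDim_le_coheight_add_one hx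
  refine ⟨PrimeSpectrum.comap (algebraMap R S) q, ?_, fun f => ?_⟩
  · calc ringKrullDim R ≤ ringKrullDim S := ringKrullDim_le_of_isIntegral
      _ ≤ coheight q + 1 := hq
      _ ≤ coheight (PrimeSpectrum.comap (algebraMap R S) q) + 1 := by
        gcongr
        exact_mod_cast coheight_le_coheight_comap_of_isIntegral q
  · have := det_submatrix_fromRows_mem (P := P.map (algebraMap R S)) (Q := Q.map (algebraMap R S))
      hxq hw hPw hQw f
    change algebraMap R S _ ∈ q.asIdeal
    rwa [RingHom.map_det, RingHom.mapMatrix_apply, ← submatrix_map, fromRows_map]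

theorem exists_minors_mem_of_det_mem_jacobson [Nontrivial R] (hP : P.det ∈ Ring.jacobson R)
    (hQ : ∀ i j, Q i j ∈ Ring.jacobson R) (h : P * Q = K * P) :
    ∃ q : PrimeSpectrum R, ringKrullDim R ≤ coheight q + 2 ∧
      ∀ f : ι → ι ⊕ ι, ((fromRows P Q).submatrix f id).det ∈ q.asIdeal := by
  obtain ⟨p, hPp, hp⟩ := exists_mem_ringKrullDim_le_coheight_add_one hP
  let π := Ideal.Quotient.mk p.asIdeal
  have hjac {r : R} (hr : r ∈ Ring.jacobson R) : π r ∈ Ring.jacobson (R ⧸ p.asIdeal) :=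
    Ring.le_comap_jacobson π hr
  obtain ⟨q, hq, hqN⟩ := exists_minors_mem_of_det_eq_zero (P := π.mapMatrix P)
    (Q := π.mapMatrix Q) (K := π.mapMatrix K)
    (by rw [← RingHom.map_det]; exact Ideal.Quotient.eq_zero_iff_mem.mpr hPp)
    (fun i j => hjac (hQ i j)) (by rw [← map_mul, h, map_mul])
  refine ⟨PrimeSpectrum.comap π q, ?_, fun f => ?_⟩
  · calc ringKrullDim R ≤ ringKrullDim (R ⧸ p.asIdeal) + 1 := by
          rwa [ringKrullDim_quotient_eq_coheight]
      _ ≤ coheight q + 1 + 1 := by gcongr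
      _ ≤ coheight (PrimeSpectrum.comap π q) + 1 + 1 := by
        gcongr
        exact_mod_cast coheight_le_coheight_comap_of_surjective Ideal.Quotient.mk_surjective q
      _ = coheight (PrimeSpectrum.comap π q) + 2 := by
        rw [add_assoc, one_add_one_eq_two]
  · change π _ ∈ q.asIdeal
    rw [RingHom.map_det, RingHom.mapMatrix_apply, ← submatrix_map, fromRows_map]
    exact hqN f

theorem exists_height_le_two_of_mem_jacobson [FiniteRingKrullDim R] (hP : P.det ∈ Ring.jacobson R)
    (hQ : ∀ i j, Q i j ∈ Ring.jacobson R) (h : P * Q = K * P) :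
    ∃ q : PrimeSpectrum R, height q ≤ 2 ∧
      ∀ f : ι → ι ⊕ ι, ((fromRows P Q).submatrix f id).det ∈ q.asIdeal := by
  have : Nontrivial R := .of_finiteRingKrullDim
  obtain ⟨q, hq, hqN⟩ := exists_minors_mem_of_det_mem_jacobson hP hQ h
  refine ⟨q, ?_, hqN⟩
  have hle : height q + coheight q ≤ 2 + coheight q := by
    rw [add_comm 2, ← WithBot.coe_le_coe]
    exact (height_add_coheight_le_ringKrullDim q).trans hq
  exact (ENat.add_le_add_iff_right (Order.coheight_lt_top q).ne).mp hle

theorem exists_height_le_two_of_mem {J : Ideal R} (hJ : J ≠ ⊤) (hP : P.det ∈ J)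
    (hQ : ∀ i j, Q i j ∈ J) (h : P * Q = K * P) :
    ∃ q : PrimeSpectrum R, height q ≤ 2 ∧
      ∀ f : ι → ι ⊕ ι, ((fromRows P Q).submatrix f id).det ∈ q.asIdeal := by
  obtain ⟨𝔪, h𝔪, hJ𝔪⟩ := J.exists_le_maximal hJ
  let φ := algebraMap R (Localization.AtPrime 𝔪)
  have hjac {r : R} (hr : r ∈ J) : φ r ∈ Ring.jacobson (Localization.AtPrime 𝔪) := by
    rw [IsLocalRing.ringJacobson_eq_maximalIdeal, IsLocalization.AtPrime.to_map_mem_maximal_iff _ 𝔪]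
    exact hJ𝔪 hr
  obtain ⟨q, hq, hqN⟩ := exists_height_le_two_of_mem_jacobson (P := φ.mapMatrix P)
    (Q := φ.mapMatrix Q) (K := φ.mapMatrix K) (by rw [← RingHom.map_det]; exact hjac hP)
    (fun i j => hjac (hQ i j)) (by rw [← map_mul, h, map_mul])
  refine ⟨PrimeSpectrum.comap φ q, ?_, fun f => ?_⟩
  · rw [← PrimeSpectrum.height_eq_orderHeight] at hq ⊢
    exact (IsLocalization.height_under 𝔪.primeCompl q.asIdeal).trans_le hq
  · change φ _ ∈ q.asIdeal
    rw [RingHom.map_det, RingHom.mapMatrix_apply, ← submatrix_map, fromRows_map]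
    exact hqN f

end Minors

theorem det_mem_of_column_mem {ι R : Type*} [Fintype ι] [DecidableEq ι] [CommRing R] {I : Ideal R}
    {A : Matrix ι ι R} (j : ι) (h : ∀ i, A i j ∈ I) : A.det ∈ I := by
  rw [← Ideal.Quotient.eq_zero_iff_mem, RingHom.map_det]
  exact det_eq_zero_of_column_eq_zero j fun i => Ideal.Quotient.eq_zero_iff_mem.mpr (h i)

theorem stack_eq_submatrix_fromRows {R : Type*} {m : ℕ} (P Q : Matrix (Fin m) (Fin m) R) :
    stack P Q = (fromRows P Q).submatrix (finSumFinEquiv.symm ∘ Fin.cast (two_mul m)) id := by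
  ext i j
  obtain ⟨i, rfl⟩ := (finCongr (two_mul m)).symm.surjective i
  cases i using Fin.addCases with
  | left i => simp [stack]
  | right i =>
    have : finSumFinEquiv.symm (i.addNat m) = Sum.inr i := by
      rw [Equiv.symm_apply_eq]
      ext
      simp [add_comm]
    simp [stack, this]

theorem maximalMinorsIdeal_stack_le {R : Type*} [CommRing R] {m : ℕ}
    {P Q : Matrix (Fin m) (Fin m) R} {I : Ideal R}
    (h : ∀ f : Fin m → Fin m ⊕ Fin m, ((fromRows P Q).submatrix f id).det ∈ I) :
    maximalMinorsIdeal (stack P Q) ≤ I := by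
  rw [maximalMinorsIdeal, Ideal.span_le]
  rintro _ ⟨f, -, rfl⟩
  rw [stack_eq_submatrix_fromRows]
  exact h _

theorem height_maximalMinors_symmetry_le_general {R : Type*} [CommRing R] [IsNoetherianRing R]
    {m : ℕ} {P Q K : Matrix (Fin m) (Fin m) R} {J : Ideal R} (hJ : J ≠ ⊤) (hP : P.det ∈ J)
    (hQ : ∀ i j, Q i j ∈ J) (hsym : P * Q = K * P) :
    idealHeight (maximalMinorsIdeal (stack P Q)) ≤ 2 := by
  obtain ⟨q, hq, hqN⟩ := exists_height_le_two_of_mem hJ hP hQ hsym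
  exact (iInf₂_le q (maximalMinorsIdeal_stack_le hqN)).trans hq

theorem mem_ker_constantCoeff_of_isHomogeneous {σ R : Type*} [CommSemiring R]
    {p : MvPolynomial σ R} {d : ℕ} (hd : 0 < d) (hp : p.IsHomogeneous d) :
    p ∈ RingHom.ker (MvPolynomial.constantCoeff (σ := σ) (R := R)) :=
  hp.coeff_eq_zero (by simpa using hd.ne)

/-- If `P`, `Q`, `K` are `m × m` matrices (`m ≥ 2`) of homogeneous polynomials
(each matrix of a common positive degree) over `ℂ[x₁,…,xₙ]` with `P·Q = K·P`
(the symbol form of the symmetry condition), then the characteristic variety of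
the joint system, i.e. the zero locus of the maximal minors of the stacked
`(2m) × m` matrix `[P; Q]`, has codimension at most `m`: the ideal of its
maximal minors has height at most `m`. -/
theorem height_maximalMinors_symmetry_le (n m : ℕ) (hn : 1 ≤ n) (hm : 2 ≤ m)
    (P Q K : Matrix (Fin m) (Fin m) (MvPolynomial (Fin n) ℂ))
    (a b : ℕ) (ha : 0 < a) (hb : 0 < b)
    (hP : ∀ i j, (P i j).IsHomogeneous a) (hQ : ∀ i j, (Q i j).IsHomogeneous b)
    (hsym : P * Q = K * P) :
    idealHeight (maximalMinorsIdeal (stack P Q)) ≤ (m : ℕ∞) :=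
  (height_maximalMinors_symmetry_le_general (RingHom.ker_ne_top _)
    (det_mem_of_column_mem ⟨0, by lia⟩ fun i => mem_ker_constantCoeff_of_isHomogeneous ha (hP i _))
    (fun i j => mem_ker_constantCoeff_of_isHomogeneous hb (hQ i j)) hsym).trans
    (by exact_mod_cast hm)
end
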